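/- Let f : ℝ² → ℝ be of class C² satisfying (i) D²f(p)(q,q) > 0 for all p, q ∈ ℝ² with q ≠ 0, and (ii) there is a constant Λ > 0 with |D²f(p)| ≤ Λ/(1+|p|) for all p ∈ ℝ². Let u ∈ C²(ℝ²) solve div[Df(∇u)] = 0 on ℝ², and suppose there is K > 0 with |∂₁u(x)| · ln²(1+|∂₁u(x)|) ≤ K(|∂₂u(x)| + 1) for all x ∈ ℝ². Then ∇∂₁u ≡ 0 on ℝ², i.e. ∂₁u is a constant function. -/

import Mathlib

open Real MeasureTheory Metric
open scoped ENNReal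

noncomputable section

/-- `ℝ²` with its Euclidean structure. -/
abbrev E2 : Type := EuclideanSpace ℝ (Fin 2)

/-- The `i`-th standard basis vector of `ℝ²`. -/
def ee (i : Fin 2) : E2 := EuclideanSpace.single i 1

/-- The Hessian bilinear form `D²f(p)(q,q)`. -/
def Hess (f : E2 → ℝ) (p q : E2) : ℝ := iteratedFDeriv ℝ 2 f p ![q, q]

/-- The partial derivative `∂ᵢu(x)`. -/
def pd (u : E2 → ℝ) (i : Fin 2) (x : E2) : ℝ := fderiv ℝ u x (ee i)

/-- The equation `div [Df(∇u)] = 0`, i.e. `∑ i, ∂ᵢ[(∂f/∂pᵢ)(∇u(x))] = 0` on `ℝ²`. -/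
def solves (f u : E2 → ℝ) : Prop :=
  ∀ x : E2, ∑ i : Fin 2, fderiv ℝ (fun y => fderiv ℝ f (gradient u y) (ee i)) x (ee i) = 0

/-! Differentiating the Euler equation in a direction `v` shows that `w = ∂ᵥu` is a weak solution of
`div (A ∇w) = 0` with `A = D²f(∇u)`. Testing against `η² φ(w)`, with `φ` bounded and increasing,
gives `∫ η² φ'(w) A(∇w, ∇w) ≤ C ∫ |∇η|²` as soon as `|A| ≤ C φ'(w)`. Since the Dirichlet integral is
conformally invariant in the plane, compact sets have zero capacity: the right-hand side can be made
arbitrarily small with `η = 1` on any prescribed ball, hence `∇w = 0`. The two growth conditions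
combine to `|A| ≤ C φ'(w)` for `φ = arctan ∘ arsinh`, because `φ'(t)` decays no faster than
`1 / (|t| log² |t|)`. -/

open Module
open scoped Gradient InnerProductSpace Topology

section Cutoff

theorem hasCompactSupport_sq_mul {X R : Type*} [TopologicalSpace X] [MonoidWithZero R] {η : X → R}
    (hη : HasCompactSupport η) (q : X → R) : HasCompactSupport fun x => η x ^ 2 * q x :=
  hη.mono fun x hx h => hx (by simp [h])

variable {E : Type*} [NormedAddCommGroup E] [NormedSpace ℝ E]

theorem integrable_norm_fderiv_sq [MeasurableSpace E] [OpensMeasurableSpace E] {μ : Measure E}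
    [IsFiniteMeasureOnCompacts μ] {η : E → ℝ} (hη : ContDiff ℝ 1 η) (hηc : HasCompactSupport η) :
    Integrable (fun x => ‖fderiv ℝ η x‖ ^ 2) μ :=
  ((hη.continuous_fderiv one_ne_zero).norm.pow 2).integrable_of_hasCompactSupport
    ((hηc.fderiv ℝ).mono fun x hx h => hx (by simp [h]))

/-- A `C¹` cutoff function: compactly supported and equal to `1` on the ball of radius `r` about
the origin. No bounds `0 ≤ η ≤ 1` are imposed. -/
structure IsCutoff (η : E → ℝ) (r : ℝ) : Prop where
  contDiff : ContDiff ℝ 1 η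
  hasCompactSupport : HasCompactSupport η
  eq_one : ∀ x ∈ ball 0 r, η x = 1

namespace IsCutoff

variable {η χ : E → ℝ} {r R : ℝ}

theorem mono (hη : IsCutoff η R) (h : r ≤ R) : IsCutoff η r :=
  ⟨hη.contDiff, hη.hasCompactSupport, fun x hx => hη.eq_one x (ball_subset_ball h hx)⟩

theorem fderiv_eq_zero (hη : IsCutoff η r) {x : E} (hx : x ∈ ball 0 r) : fderiv ℝ η x = 0 := by
  have hconst : η =ᶠ[𝓝 x] fun _ => 1 :=
    Filter.eventuallyEq_of_mem (isOpen_ball.mem_nhds hx) hη.eq_one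
  rw [hconst.fderiv_eq, fderiv_const_apply]

theorem convexCombination (hη : IsCutoff η r) (hχ : IsCutoff χ r) (t : ℝ) :
    IsCutoff (fun x => t * η x + (1 - t) * χ x) r where
  contDiff := (contDiff_const.mul hη.contDiff).add (contDiff_const.mul hχ.contDiff)
  hasCompactSupport := hη.hasCompactSupport.mul_left.add hχ.hasCompactSupport.mul_left
  eq_one x hx := by rw [hη.eq_one x hx, hχ.eq_one x hx]; ring

theorem norm_fderiv_convexCombination_sq (hη : IsCutoff η r) (hχ : IsCutoff χ R)
    (hsupp : tsupport η ⊆ ball 0 R) (t : ℝ) (x : E) :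
    ‖fderiv ℝ (fun y => t * η y + (1 - t) * χ y) x‖ ^ 2 =
      t ^ 2 * ‖fderiv ℝ η x‖ ^ 2 + (1 - t) ^ 2 * ‖fderiv ℝ χ x‖ ^ 2 := by
  have hηx := hη.contDiff.differentiable one_ne_zero x
  have hχx := hχ.contDiff.differentiable one_ne_zero x
  rw [fderiv_fun_add (hηx.const_mul t) (hχx.const_mul _), fderiv_const_mul hηx,
    fderiv_const_mul hχx]
  by_cases hx : x ∈ ball (0 : E) R
  · simp [hχ.fderiv_eq_zero hx, norm_smul, mul_pow]
  · have hη0 : fderiv ℝ η x = 0 := by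
      by_contra h
      exact hx (hsupp (support_fderiv_subset ℝ h))
    simp [hη0, norm_smul, mul_pow]

variable [MeasurableSpace E] [OpensMeasurableSpace E] {μ : Measure E}
  [IsFiniteMeasureOnCompacts μ]

theorem integral_norm_fderiv_convexCombination_sq (hη : IsCutoff η r) (hχ : IsCutoff χ R)
    (hsupp : tsupport η ⊆ ball 0 R) (t : ℝ) :
    ∫ x, ‖fderiv ℝ (fun y => t * η y + (1 - t) * χ y) x‖ ^ 2 ∂μ =
      t ^ 2 * ∫ x, ‖fderiv ℝ η x‖ ^ 2 ∂μ + (1 - t) ^ 2 * ∫ x, ‖fderiv ℝ χ x‖ ^ 2 ∂μ := by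
  simp only [norm_fderiv_convexCombination_sq hη hχ hsupp]
  rw [integral_add ((integrable_norm_fderiv_sq hη.contDiff hη.hasCompactSupport).const_mul _)
    ((integrable_norm_fderiv_sq hχ.contDiff hχ.hasCompactSupport).const_mul _),
    integral_const_mul, integral_const_mul]

end IsCutoff

end Cutoff

section Capacity

variable {E : Type*} [NormedAddCommGroup E] [NormedSpace ℝ E] [FiniteDimensional ℝ E]
  [MeasurableSpace E] [BorelSpace E] (μ : Measure E) [μ.IsAddHaarMeasure]

theorem integral_norm_fderiv_comp_inv_smul_sq (χ : E → ℝ) {R : ℝ} (hR : 0 ≤ R) :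
    ∫ x, ‖fderiv ℝ (fun y => χ (R⁻¹ • y)) x‖ ^ 2 ∂μ =
      R ^ finrank ℝ E / R ^ 2 * ∫ x, ‖fderiv ℝ χ x‖ ^ 2 ∂μ := by
  have hderiv (x : E) : ‖fderiv ℝ (fun y => χ (R⁻¹ • y)) x‖ ^ 2 =
      (R ^ 2)⁻¹ * ‖fderiv ℝ χ (R⁻¹ • x)‖ ^ 2 := by
    rw [fderiv_comp_smul, norm_smul, mul_pow, norm_inv, inv_pow, Real.norm_eq_abs, sq_abs]
  simp only [hderiv]
  rw [integral_const_mul,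
    Measure.integral_comp_inv_smul_of_nonneg μ (fun x => ‖fderiv ℝ χ x‖ ^ 2) hR, smul_eq_mul]
  ring

theorem exists_isCutoff_integral_norm_fderiv_sq_le (hdim : finrank ℝ E ≤ 2) :
    ∃ c, ∀ R, 1 ≤ R → ∃ χ : E → ℝ, IsCutoff χ R ∧ ∫ x, ‖fderiv ℝ χ x‖ ^ 2 ∂μ ≤ c := by
  let χ : ContDiffBump (0 : E) := ⟨1, 2, one_pos, one_lt_two⟩
  refine ⟨∫ x, ‖fderiv ℝ χ x‖ ^ 2 ∂μ, fun R hR => ?_⟩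
  have hR0 : 0 < R := one_pos.trans_le hR
  refine ⟨fun x => χ (R⁻¹ • x), ⟨χ.contDiff.comp (contDiff_const_smul _),
    χ.hasCompactSupport.comp_smul (inv_ne_zero hR0.ne'), fun x hx => ?_⟩, ?_⟩
  · refine χ.one_of_mem_closedBall ?_
    rw [mem_ball_zero_iff] at hx
    rw [mem_closedBall_zero_iff, norm_smul, norm_inv, Real.norm_of_nonneg hR0.le,
      inv_mul_le_iff₀ hR0]
    simpa [χ] using hx.le
  · rw [integral_norm_fderiv_comp_inv_smul_sq μ χ hR0.le]
    have hscale : R ^ finrank ℝ E / R ^ 2 ≤ 1 :=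
      div_le_one_of_le₀ (pow_le_pow_right₀ hR hdim) (by positivity)
    exact mul_le_of_le_one_left (integral_nonneg fun x => sq_nonneg _) hscale

/-- Averaging a cutoff of energy `c / (n + 1)` with one of energy `c` that is constant on its
support gives energy `c / (n + 2)`, since the two gradients do not interact. -/
theorem exists_isCutoff_integral_norm_fderiv_sq_le_div (hdim : finrank ℝ E ≤ 2) :
    ∃ c, ∀ (r : ℝ) (n : ℕ), ∃ η : E → ℝ,
      IsCutoff η r ∧ ∫ x, ‖fderiv ℝ η x‖ ^ 2 ∂μ ≤ c / (n + 1) := by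
  obtain ⟨c, hc⟩ := exists_isCutoff_integral_norm_fderiv_sq_le μ hdim
  refine ⟨c, fun r n => ?_⟩
  induction n with
  | zero =>
    obtain ⟨χ, hχ, hχc⟩ := hc (max r 1) (le_max_right r 1)
    exact ⟨χ, hχ.mono (le_max_left r 1), by simpa using hχc⟩
  | succ n ih =>
    obtain ⟨η, hη, hηc⟩ := ih
    obtain ⟨ρ, hρ⟩ := hη.hasCompactSupport.isCompact.isBounded.subset_ball 0
    obtain ⟨χ, hχ, hχc⟩ := hc (max ρ (max r 1)) (by simp)
    have hsupp : tsupport η ⊆ ball 0 (max ρ (max r 1)) :=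
      hρ.trans (ball_subset_ball (le_max_left _ _))
    let t : ℝ := (n + 1) / (n + 2)
    refine ⟨_, hη.convexCombination (hχ.mono (by simp)) t, ?_⟩
    rw [hη.integral_norm_fderiv_convexCombination_sq hχ hsupp]
    calc t ^ 2 * ∫ x, ‖fderiv ℝ η x‖ ^ 2 ∂μ + (1 - t) ^ 2 * ∫ x, ‖fderiv ℝ χ x‖ ^ 2 ∂μ
        ≤ t ^ 2 * (c / (n + 1)) + (1 - t) ^ 2 * c := by gcongr
      _ = c / ((n + 1 : ℕ) + 1) := by
        push_cast
        simp only [t]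
        field_simp
        ring

variable {μ}

theorem eq_zero_of_integral_sq_mul_le (hdim : finrank ℝ E ≤ 2) {q : E → ℝ} (hq : Continuous q)
    (hq0 : ∀ x, 0 ≤ q x) {C : ℝ}
    (hqC : ∀ η : E → ℝ, ContDiff ℝ 1 η → HasCompactSupport η →
      ∫ x, η x ^ 2 * q x ∂μ ≤ C * ∫ x, ‖fderiv ℝ η x‖ ^ 2 ∂μ) (x : E) :
    q x = 0 := by
  obtain ⟨c, hc⟩ := exists_isCutoff_integral_norm_fderiv_sq_le_div μ hdim
  set r := ‖x‖ + 1
  choose η hη hηc using hc r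
  have henergy : Filter.Tendsto (fun n => ∫ y, ‖fderiv ℝ (η n) y‖ ^ 2 ∂μ) Filter.atTop (𝓝 0) :=
    squeeze_zero (fun n => integral_nonneg fun y => sq_nonneg _) hηc
      (by simpa [div_eq_mul_inv] using tendsto_one_div_add_atTop_nhds_zero_nat.const_mul c)
  have hball (n : ℕ) : ∫ y in ball 0 r, q y ∂μ ≤ C * ∫ y, ‖fderiv ℝ (η n) y‖ ^ 2 ∂μ := by
    have hint : Integrable (fun y => η n y ^ 2 * q y) μ :=
      (((hη n).contDiff.continuous.pow 2).mul hq).integrable_of_hasCompactSupport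
        (hasCompactSupport_sq_mul (hη n).hasCompactSupport q)
    calc ∫ y in ball 0 r, q y ∂μ = ∫ y in ball 0 r, η n y ^ 2 * q y ∂μ :=
          setIntegral_congr_fun measurableSet_ball fun y hy => by simp [(hη n).eq_one y hy]
      _ ≤ ∫ y, η n y ^ 2 * q y ∂μ := setIntegral_le_integral hint
          (Filter.Eventually.of_forall fun y => mul_nonneg (sq_nonneg _) (hq0 y))
      _ ≤ C * ∫ y, ‖fderiv ℝ (η n) y‖ ^ 2 ∂μ := hqC _ (hη n).contDiff (hη n).hasCompactSupport
  have hzero : ∫ y in ball 0 r, q y ∂μ = 0 :=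
    le_antisymm (ge_of_tendsto' (by simpa using henergy.const_mul C) hball) (integral_nonneg hq0)
  have hqball : IntegrableOn q (ball 0 r) μ :=
    (hq.continuousOn.integrableOn_compact (isCompact_closedBall 0 r)).mono_set
      ball_subset_closedBall
  rw [setIntegral_eq_zero_iff_of_nonneg_ae (Filter.Eventually.of_forall hq0) hqball] at hzero
  exact Measure.eqOn_open_of_ae_eq hzero isOpen_ball hq.continuousOn continuousOn_const
    (show x ∈ ball 0 r by simp [r])

end Capacity

section DivergenceFree

variable {E : Type*} [NormedAddCommGroup E] [NormedSpace ℝ E] [MeasurableSpace E] [BorelSpace E]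
  {μ : Measure E}

theorem hasDerivAt_integral_comp_add_smul_mul [IsFiniteMeasureOnCompacts μ] {F g : E → ℝ}
    (hF : ContDiff ℝ 1 F) (hg : Continuous g) (hgc : HasCompactSupport g) (v : E) :
    HasDerivAt (fun t : ℝ => ∫ x, F (x + t • v) * g x ∂μ) (∫ x, fderiv ℝ F x v * g x ∂μ) 0 := by
  have hFc := hF.continuous
  have hint (t : ℝ) : Integrable (fun x => F (x + t • v) * g x) μ :=
    Continuous.integrable_of_hasCompactSupport (by fun_prop) hgc.mul_left
  have hF' : Continuous fun p : ℝ × E => fderiv ℝ F (p.2 + p.1 • v) v :=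
    ((hF.continuous_fderiv one_ne_zero).comp (by fun_prop)).clm_apply continuous_const
  obtain ⟨M, hM⟩ := (isCompact_Icc.prod hgc.isCompact).exists_bound_of_continuousOn
    (s := Set.Icc (-1) 1 ×ˢ tsupport g) hF'.continuousOn
  have hderiv (x : E) (t : ℝ) :
      HasDerivAt (fun s : ℝ => F (x + s • v) * g x) (fderiv ℝ F (x + t • v) v * g x) t := by
    have hline : HasDerivAt (fun s : ℝ => x + s • v) v t := by
      simpa using ((hasDerivAt_id t).smul_const v).const_add x
    exact ((hF.differentiable one_ne_zero _).hasFDerivAt.comp_hasDerivAt t hline).mul_const _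
  have hbound (x : E) (t : ℝ) (ht : t ∈ Set.Icc (-1) 1) :
      ‖fderiv ℝ F (x + t • v) v * g x‖ ≤ M * ‖g x‖ := by
    by_cases hx : x ∈ tsupport g
    · rw [norm_mul]
      gcongr
      exact hM (t, x) ⟨ht, hx⟩
    · simp [image_eq_zero_of_notMem_tsupport hx]
  simpa using (hasDerivAt_integral_of_dominated_loc_of_deriv_le
    (Icc_mem_nhds (by norm_num) (by norm_num))
    (Filter.Eventually.of_forall fun t => (hint t).aestronglyMeasurable) (hint 0)
    ((hF'.comp (Continuous.prodMk_right 0)).mul hg).aestronglyMeasurable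
    (Filter.Eventually.of_forall hbound)
    ((hg.integrable_of_hasCompactSupport hgc).norm.const_mul M)
    (Filter.Eventually.of_forall fun x t _ => hderiv x t)).2

variable [FiniteDimensional ℝ E] [μ.IsAddHaarMeasure] {ι : Type*} [Fintype ι] {e : ι → E}
  {F : ι → E → ℝ} {ψ : E → ℝ}

theorem sum_integral_mul_fderiv_eq_zero (hF : ∀ i, ContDiff ℝ 1 (F i))
    (hdiv : ∀ x, ∑ i, fderiv ℝ (F i) x (e i) = 0) (hψ : ContDiff ℝ 1 ψ)
    (hψc : HasCompactSupport ψ) :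
    ∑ i, ∫ x, F i x * fderiv ℝ ψ x (e i) ∂μ = 0 := by
  have hF' (i : ι) : Continuous fun x => fderiv ℝ (F i) x (e i) :=
    ((hF i).continuous_fderiv one_ne_zero).clm_apply continuous_const
  have hψ' (i : ι) : Continuous fun x => fderiv ℝ ψ x (e i) :=
    (hψ.continuous_fderiv one_ne_zero).clm_apply continuous_const
  have hint (i : ι) : Integrable (fun x => fderiv ℝ (F i) x (e i) * ψ x) μ :=
    ((hF' i).mul hψ.continuous).integrable_of_hasCompactSupport hψc.mul_left
  have hparts (i : ι) : ∫ x, F i x * fderiv ℝ ψ x (e i) ∂μ =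
      -∫ x, fderiv ℝ (F i) x (e i) * ψ x ∂μ :=
    integral_mul_fderiv_eq_neg_fderiv_mul_of_integrable (hint i)
      (((hF i).continuous.mul (hψ' i)).integrable_of_hasCompactSupport
        (hψc.fderiv_apply ℝ (e i)).mul_left)
      (((hF i).continuous.mul hψ.continuous).integrable_of_hasCompactSupport hψc.mul_left)
      (fun x _ => (hF i).differentiable one_ne_zero x) fun x _ => hψ.differentiable one_ne_zero x
  simp only [hparts, Finset.sum_neg_distrib]
  rw [← integral_finsetSum _ fun i _ => hint i]
  simp [← Finset.sum_mul, hdiv]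

/-- Translates of `F` are divergence-free too; differentiating the translation puts no derivative on
`ψ`, which therefore need not be `C²`. -/
theorem sum_integral_fderiv_mul_fderiv_eq_zero (hF : ∀ i, ContDiff ℝ 1 (F i))
    (hdiv : ∀ x, ∑ i, fderiv ℝ (F i) x (e i) = 0) (hψ : ContDiff ℝ 1 ψ)
    (hψc : HasCompactSupport ψ) (v : E) :
    ∑ i, ∫ x, fderiv ℝ (F i) x v * fderiv ℝ ψ x (e i) ∂μ = 0 := by
  have hzero (t : ℝ) : ∑ i, ∫ x, F i (x + t • v) * fderiv ℝ ψ x (e i) ∂μ = 0 :=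
    sum_integral_mul_fderiv_eq_zero (F := fun i x => F i (x + t • v))
      (fun i => (hF i).comp (contDiff_id.add contDiff_const))
      (fun x => by simpa only [fderiv_comp_add_right] using hdiv (x + t • v)) hψ hψc
  have hderiv : HasDerivAt (fun t : ℝ => ∑ i, ∫ x, F i (x + t • v) * fderiv ℝ ψ x (e i) ∂μ)
      (∑ i, ∫ x, fderiv ℝ (F i) x v * fderiv ℝ ψ x (e i) ∂μ) 0 :=
    HasDerivAt.fun_sum fun i _ => hasDerivAt_integral_comp_add_smul_mul (hF i)
      ((hψ.continuous_fderiv one_ne_zero).clm_apply continuous_const) (hψc.fderiv_apply ℝ (e i)) v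
  simp only [hzero] at hderiv
  exact hderiv.unique (hasDerivAt_const 0 0)

end DivergenceFree

section Gradient

variable {E : Type*} [NormedAddCommGroup E] [InnerProductSpace ℝ E] [CompleteSpace E]

theorem norm_gradient (u : E → ℝ) (x : E) : ‖∇ u x‖ = ‖fderiv ℝ u x‖ :=
  LinearIsometryEquiv.norm_map _ _

theorem contDiff_gradient {u : E → ℝ} {m n : WithTop ℕ∞} (hu : ContDiff ℝ n u) (hmn : m + 1 ≤ n) :
    ContDiff ℝ m (∇ u) :=
  (InnerProductSpace.toDual ℝ E).symm.contDiff.comp (hu.fderiv_right hmn)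

theorem continuous_gradient {u : E → ℝ} (hu : ContDiff ℝ 1 u) : Continuous (∇ u) :=
  (contDiff_gradient (m := 0) hu le_rfl).continuous

theorem gradient_eq_sum {ι : Type*} [Fintype ι] (b : OrthonormalBasis ι ℝ E) (u : E → ℝ) (x : E) :
    ∇ u x = ∑ i, fderiv ℝ u x (b i) • b i := by
  simpa [inner_gradient_right] using (b.sum_repr' (∇ u x)).symm

theorem fderiv_gradient_apply {u : E → ℝ} (hu : ContDiff ℝ 2 u) (x v : E) :
    fderiv ℝ (∇ u) x v = ∇ (fun y => fderiv ℝ u y v) x := by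
  have hu' : DifferentiableAt ℝ (fderiv ℝ u) x :=
    (hu.fderiv_right (m := 1) le_rfl).differentiable one_ne_zero x
  have hgrad : DifferentiableAt ℝ (∇ u) x :=
    (contDiff_gradient (m := 1) hu le_rfl).differentiable one_ne_zero x
  have hsecond (y z : E) :
      fderiv ℝ (fun y => fderiv ℝ u y z) x y = fderiv ℝ (fderiv ℝ u) x y z := by
    simp [fderiv_clm_apply hu' (differentiableAt_const z)]
  refine ext_inner_right ℝ fun z => ?_
  calc ⟪fderiv ℝ (∇ u) x v, z⟫_ℝ = fderiv ℝ (fun y => ⟪∇ u y, z⟫_ℝ) x v := by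
        rw [fderiv_inner_apply ℝ hgrad (differentiableAt_const z)]
        simp
    _ = fderiv ℝ (fderiv ℝ u) x v z := by simp only [inner_gradient_left, hsecond]
    _ = fderiv ℝ (fderiv ℝ u) x z v := hu.contDiffAt.isSymmSndFDerivAt (by simp) _ _
    _ = ⟪∇ (fun y => fderiv ℝ u y v) x, z⟫_ℝ := by rw [inner_gradient_left, hsecond]

theorem gradient_sq_mul_comp {η w : E → ℝ} {φ : ℝ → ℝ} {x : E} (hη : DifferentiableAt ℝ η x)
    (hw : DifferentiableAt ℝ w x) (hφ : DifferentiableAt ℝ φ (w x)) :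
    ∇ (fun y => η y ^ 2 * φ (w y)) x =
      (η x ^ 2 * deriv φ (w x)) • ∇ w x + (2 * η x * φ (w x)) • ∇ η x := by
  have h := (hη.hasFDerivAt.pow 2).mul (hφ.hasDerivAt.comp_hasFDerivAt x hw.hasFDerivAt)
  refine ext_inner_right ℝ fun z => ?_
  rw [inner_gradient_left, inner_add_left, inner_smul_left, inner_smul_left, inner_gradient_left,
    inner_gradient_left]
  refine (congrArg (fun L : E →L[ℝ] ℝ => L z) h.fderiv).trans ?_
  simp only [Function.comp_apply, Nat.add_one_sub_one, pow_one, nsmul_eq_mul, Nat.cast_ofNat,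
    add_apply, smul_apply, smul_eq_mul, ringHom_apply]
  ring

end Gradient

section WeakSolution

variable {E : Type*} [NormedAddCommGroup E] [InnerProductSpace ℝ E]

theorem neg_two_mul_apply_le {B : E →L[ℝ] E →L[ℝ] ℝ} (hsymm : ∀ g h, B g h = B h g)
    (hnonneg : ∀ g, 0 ≤ B g g) {C s : ℝ} (hC : 0 ≤ C) (hs : 0 ≤ s) (hB : ‖B‖ ≤ C * s) {y M : ℝ}
    (hy : |y| ≤ M) (a : ℝ) (g h : E) :
    -(2 * a * y * B g h) ≤ 1 / 2 * (a ^ 2 * (s * B g g)) + 2 * C * M ^ 2 * ‖h‖ ^ 2 := by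
  have hcauchy : B g h ^ 2 ≤ B g g * B h h :=
    LinearMap.BilinForm.apply_sq_le_of_symm B.toLinearMap₁₂ hnonneg ⟨hsymm⟩ g h
  have hBh : B h h ≤ C * s * ‖h‖ ^ 2 :=
    calc B h h ≤ ‖B‖ * ‖h‖ * ‖h‖ := (Real.le_norm_self _).trans (B.le_opNorm₂ h h)
      _ ≤ C * s * ‖h‖ * ‖h‖ := by gcongr
      _ = C * s * ‖h‖ ^ 2 := by ring
  have hy2 : y ^ 2 ≤ M ^ 2 := sq_le_sq' (abs_le.1 hy).1 (abs_le.1 hy).2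
  have hg := hnonneg g
  refine (abs_le_of_sq_le_sq' ?_ (by positivity)).2
  calc (-(2 * a * y * B g h)) ^ 2 = 4 * a ^ 2 * y ^ 2 * B g h ^ 2 := by ring
    _ ≤ 4 * a ^ 2 * M ^ 2 * (B g g * (C * s * ‖h‖ ^ 2)) := by
      gcongr
      exact hcauchy.trans (by gcongr)
    _ = 4 * (1 / 2 * (a ^ 2 * (s * B g g))) * (2 * C * M ^ 2 * ‖h‖ ^ 2) := by ring
    _ ≤ (1 / 2 * (a ^ 2 * (s * B g g)) + 2 * C * M ^ 2 * ‖h‖ ^ 2) ^ 2 := four_mul_le_sq_add _ _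

variable [FiniteDimensional ℝ E]

section Integrability

variable {A : E → E →L[ℝ] E →L[ℝ] ℝ} {w η : E → ℝ} {φ : ℝ → ℝ}

theorem continuous_deriv_mul_apply_gradient (hA : Continuous A) (hw : ContDiff ℝ 1 w)
    (hφ : ContDiff ℝ 1 φ) : Continuous fun x => deriv φ (w x) * A x (∇ w x) (∇ w x) :=
  (hφ.continuous_deriv_one.comp hw.continuous).mul
    ((hA.clm_apply (continuous_gradient hw)).clm_apply (continuous_gradient hw))

variable [MeasurableSpace E] [BorelSpace E]

theorem integrable_sq_mul_deriv_mul_apply_gradient (hA : Continuous A) (hw : ContDiff ℝ 1 w)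
    (hφ : ContDiff ℝ 1 φ) (hη : Continuous η) (hηc : HasCompactSupport η) :
    Integrable fun x => η x ^ 2 * (deriv φ (w x) * A x (∇ w x) (∇ w x)) :=
  ((hη.pow 2).mul (continuous_deriv_mul_apply_gradient hA hw hφ)).integrable_of_hasCompactSupport
    (hasCompactSupport_sq_mul hηc _)

theorem integrable_neg_two_mul_apply_gradient (hA : Continuous A) (hw : ContDiff ℝ 1 w)
    (hφ : Continuous φ) (hη : ContDiff ℝ 1 η) (hηc : HasCompactSupport η) :
    Integrable fun x => -(2 * η x * φ (w x) * A x (∇ w x) (∇ η x)) := by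
  have hflux : Continuous fun x => A x (∇ w x) (∇ η x) :=
    (hA.clm_apply (continuous_gradient hw)).clm_apply (continuous_gradient hη)
  exact (((continuous_const.mul hη.continuous).mul (hφ.comp hw.continuous)).mul
    hflux).neg.integrable_of_hasCompactSupport (hηc.mono fun x hx hηx => hx (by simp [hηx]))

end Integrability

variable [MeasurableSpace E] [BorelSpace E]

/-- `w` solves `div (A ∇w) = 0` weakly, the coefficient matrix `A x` being encoded as a bilinear
form; test functions are `C¹` with compact support. -/
def IsWeakSolution (A : E → E →L[ℝ] E →L[ℝ] ℝ) (w : E → ℝ) : Prop :=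
  ∀ ψ : E → ℝ, ContDiff ℝ 1 ψ → HasCompactSupport ψ → ∫ x, A x (∇ w x) (∇ ψ x) = 0

theorem isWeakSolution_fderiv_apply {ι : Type*} [Fintype ι] (b : OrthonormalBasis ι ℝ E)
    {f u : E → ℝ} (hf : ContDiff ℝ 2 f) (hu : ContDiff ℝ 2 u)
    (heq : ∀ x, ∑ i, fderiv ℝ (fun y => fderiv ℝ f (∇ u y) (b i)) x (b i) = 0) (v : E) :
    IsWeakSolution (fun x => fderiv ℝ (fderiv ℝ f) (∇ u x)) (fun x => fderiv ℝ u x v) := by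
  intro ψ hψ hψc
  have hf' : ContDiff ℝ 1 (fderiv ℝ f) := hf.fderiv_right le_rfl
  have hgrad : ContDiff ℝ 1 (∇ u) := contDiff_gradient hu le_rfl
  have hF (i : ι) : ContDiff ℝ 1 fun y => fderiv ℝ f (∇ u y) (b i) :=
    (hf'.comp hgrad).clm_apply contDiff_const
  have hchain (i : ι) (x : E) : fderiv ℝ (fun y => fderiv ℝ f (∇ u y) (b i)) x v =
      fderiv ℝ (fderiv ℝ f) (∇ u x) (∇ (fun y => fderiv ℝ u y v) x) (b i) := by
    have h := ((hf'.differentiable one_ne_zero _).hasFDerivAt.comp x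
      (hgrad.differentiable one_ne_zero x).hasFDerivAt).clm_apply (hasFDerivAt_const (b i) x)
    refine (congrArg (fun L : E →L[ℝ] ℝ => L v) h.fderiv).trans ?_
    simp [fderiv_gradient_apply hu]
  have hint (i : ι) : Integrable fun x =>
      fderiv ℝ (fun y => fderiv ℝ f (∇ u y) (b i)) x v * fderiv ℝ ψ x (b i) :=
    Continuous.integrable_of_hasCompactSupport
      ((((hF i).continuous_fderiv one_ne_zero).clm_apply continuous_const).mul
        ((hψ.continuous_fderiv one_ne_zero).clm_apply continuous_const))
      (hψc.fderiv_apply ℝ (b i)).mul_left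
  rw [← sum_integral_fderiv_mul_fderiv_eq_zero (μ := volume) hF heq hψ hψc v,
    ← integral_finsetSum _ fun i _ => hint i]
  congr 1 with x
  simp only [gradient_eq_sum b ψ x, map_sum, map_smul, smul_eq_mul, hchain, mul_comm]

namespace IsWeakSolution

variable {A : E → E →L[ℝ] E →L[ℝ] ℝ} {w : E → ℝ} {φ : ℝ → ℝ} {C M : ℝ}

theorem integral_sq_mul_deriv_mul_eq (h : IsWeakSolution A w) (hA : Continuous A)
    (hw : ContDiff ℝ 1 w) (hφ : ContDiff ℝ 1 φ) {η : E → ℝ} (hη : ContDiff ℝ 1 η)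
    (hηc : HasCompactSupport η) :
    ∫ x, η x ^ 2 * (deriv φ (w x) * A x (∇ w x) (∇ w x)) =
      ∫ x, -(2 * η x * φ (w x) * A x (∇ w x) (∇ η x)) := by
  have htest := h (fun x => η x ^ 2 * φ (w x)) ((hη.pow 2).mul (hφ.comp hw))
    (hasCompactSupport_sq_mul hηc _)
  have hexpand (x : E) : A x (∇ w x) (∇ (fun y => η y ^ 2 * φ (w y)) x) =
      η x ^ 2 * (deriv φ (w x) * A x (∇ w x) (∇ w x)) -
        -(2 * η x * φ (w x) * A x (∇ w x) (∇ η x)) := by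
    rw [gradient_sq_mul_comp (hη.differentiable one_ne_zero x) (hw.differentiable one_ne_zero x)
      (hφ.differentiable one_ne_zero _)]
    simp only [map_add, map_smul, smul_eq_mul]
    ring
  simp only [hexpand] at htest
  rwa [integral_sub (integrable_sq_mul_deriv_mul_apply_gradient hA hw hφ hη.continuous hηc)
    (integrable_neg_two_mul_apply_gradient hA hw hφ.continuous hη hηc), sub_eq_zero] at htest

theorem integral_sq_mul_deriv_mul_le (h : IsWeakSolution A w) (hA : Continuous A)
    (hsymm : ∀ x g h, A x g h = A x h g) (hnonneg : ∀ x g, 0 ≤ A x g g) (hw : ContDiff ℝ 1 w)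
    (hφ : ContDiff ℝ 1 φ) (hφM : ∀ t, |φ t| ≤ M) (hφ' : ∀ t, 0 ≤ deriv φ t) (hC : 0 ≤ C)
    (hAC : ∀ x, ‖A x‖ ≤ C * deriv φ (w x)) {η : E → ℝ} (hη : ContDiff ℝ 1 η)
    (hηc : HasCompactSupport η) :
    ∫ x, η x ^ 2 * (deriv φ (w x) * A x (∇ w x) (∇ w x)) ≤
      4 * C * M ^ 2 * ∫ x, ‖fderiv ℝ η x‖ ^ 2 := by
  have hlhs := integrable_sq_mul_deriv_mul_apply_gradient hA hw hφ hη.continuous hηc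
  have hcross := integrable_neg_two_mul_apply_gradient hA hw hφ.continuous hη hηc
  have henergy : Integrable fun x => ‖fderiv ℝ η x‖ ^ 2 := integrable_norm_fderiv_sq hη hηc
  have hyoung : ∫ x, -(2 * η x * φ (w x) * A x (∇ w x) (∇ η x)) ≤
      1 / 2 * (∫ x, η x ^ 2 * (deriv φ (w x) * A x (∇ w x) (∇ w x))) +
        2 * C * M ^ 2 * ∫ x, ‖fderiv ℝ η x‖ ^ 2 := by
    rw [← integral_const_mul, ← integral_const_mul,
      ← integral_add (hlhs.const_mul _) (henergy.const_mul _)]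
    refine integral_mono hcross ((hlhs.const_mul _).add (henergy.const_mul _)) fun x => ?_
    simpa only [norm_gradient] using
      neg_two_mul_apply_le (hsymm x) (hnonneg x) hC (hφ' _) (hAC x) (hφM _) (η x) (∇ w x) (∇ η x)
  rw [← h.integral_sq_mul_deriv_mul_eq hA hw hφ hη hηc] at hyoung
  linarith

theorem gradient_eq_zero (h : IsWeakSolution A w) (hdim : finrank ℝ E ≤ 2) (hA : Continuous A)
    (hsymm : ∀ x g h, A x g h = A x h g) (hpos : ∀ x g, g ≠ 0 → 0 < A x g g) (hw : ContDiff ℝ 1 w)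
    (hφ : ContDiff ℝ 1 φ) (hφM : ∀ t, |φ t| ≤ M) (hφ' : ∀ t, 0 < deriv φ t)
    (hAC : ∀ x, ‖A x‖ ≤ C * deriv φ (w x)) (x : E) :
    ∇ w x = 0 := by
  have hnonneg (y g : E) : 0 ≤ A y g g := by
    rcases eq_or_ne g 0 with rfl | hg
    · simp
    · exact (hpos y g hg).le
  have hC : 0 ≤ C := nonneg_of_mul_nonneg_left ((norm_nonneg (A x)).trans (hAC x)) (hφ' _)
  have hzero : deriv φ (w x) * A x (∇ w x) (∇ w x) = 0 :=
    eq_zero_of_integral_sq_mul_le (μ := volume) hdim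
      (continuous_deriv_mul_apply_gradient hA hw hφ)
      (fun y => mul_nonneg (hφ' _).le (hnonneg y _))
      (fun η => h.integral_sq_mul_deriv_mul_le hA hsymm hnonneg hw hφ hφM (fun t => (hφ' t).le)
        hC hAC) x
  by_contra hne
  exact (mul_pos (hφ' (w x)) (hpos x _ hne)).ne' hzero

end IsWeakSolution

end WeakSolution

theorem exists_fderiv_apply_eq_const_of_norm_hessian_le {E ι : Type*} [NormedAddCommGroup E]
    [InnerProductSpace ℝ E] [FiniteDimensional ℝ E] [Fintype ι] (b : OrthonormalBasis ι ℝ E)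
    (hdim : finrank ℝ E ≤ 2) {f u : E → ℝ} (hf : ContDiff ℝ 2 f) (hu : ContDiff ℝ 2 u)
    (hpos : ∀ x q, q ≠ 0 → 0 < fderiv ℝ (fderiv ℝ f) (∇ u x) q q)
    (heq : ∀ x, ∑ i, fderiv ℝ (fun y => fderiv ℝ f (∇ u y) (b i)) x (b i) = 0) (v : E)
    {φ : ℝ → ℝ} (hφ : ContDiff ℝ 1 φ) {M : ℝ} (hφM : ∀ t, |φ t| ≤ M) (hφ' : ∀ t, 0 < deriv φ t)
    {C : ℝ} (hgrow : ∀ x, ‖fderiv ℝ (fderiv ℝ f) (∇ u x)‖ ≤ C * deriv φ (fderiv ℝ u x v)) :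
    ∃ a : ℝ, ∀ x, fderiv ℝ u x v = a := by
  borelize E
  have hw : ContDiff ℝ 1 fun x => fderiv ℝ u x v :=
    (hu.fderiv_right (m := 1) le_rfl).clm_apply contDiff_const
  have hA : Continuous fun x => fderiv ℝ (fderiv ℝ f) (∇ u x) :=
    ((hf.fderiv_right (m := 1) le_rfl).continuous_fderiv one_ne_zero).comp
      (continuous_gradient (hu.of_le one_le_two))
  have hgrad : ∀ x, ∇ (fun y => fderiv ℝ u y v) x = 0 :=
    (isWeakSolution_fderiv_apply b hf hu heq v).gradient_eq_zero hdim hA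
      (fun x g h => hf.contDiffAt.isSymmSndFDerivAt (by simp) g h) hpos hw hφ hφM hφ' hgrow
  have hfderiv (x : E) : fderiv ℝ (fun y => fderiv ℝ u y v) x = 0 := by
    rw [← norm_eq_zero, ← norm_gradient, hgrad, norm_zero]
  exact ⟨_, fun x => is_const_of_fderiv_eq_zero (hw.differentiable one_ne_zero) hfderiv x 0⟩

section ArctanArsinh

theorem sqrt_one_add_sq_le (t : ℝ) : √(1 + t ^ 2) ≤ 1 + |t| :=
  Real.sqrt_le_iff.2 ⟨by positivity, by nlinarith [sq_abs t, abs_nonneg t]⟩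

theorem arsinh_sq_le (t : ℝ) : arsinh t ^ 2 ≤ 4 * log (1 + |t|) ^ 2 := by
  wlog ht : 0 ≤ t generalizing t
  · simpa using this (-t) (by linarith)
  have hle : arsinh t ≤ 2 * log (1 + t) :=
    calc arsinh t ≤ log ((1 + t) ^ 2) := by
          refine Real.log_le_log (by positivity) ?_
          have := sqrt_one_add_sq_le t
          rw [abs_of_nonneg ht] at this
          nlinarith
      _ = 2 * log (1 + t) := by simp
  calc arsinh t ^ 2 ≤ (2 * log (1 + t)) ^ 2 :=
        pow_le_pow_left₀ (Real.arsinh_nonneg_iff.2 ht) hle 2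
    _ = 4 * log (1 + |t|) ^ 2 := by rw [abs_of_nonneg ht]; ring

theorem sqrt_mul_one_add_arsinh_sq_le (t : ℝ) :
    √(1 + t ^ 2) * (1 + arsinh t ^ 2) ≤ 7 + 9 * (|t| * log (1 + |t|) ^ 2) := by
  set s := |t|
  have hs : 0 ≤ s := abs_nonneg t
  set L := log (1 + s)
  have hL : 0 ≤ L := Real.log_nonneg (by linarith)
  have hLs : L ≤ s := by linarith [Real.log_le_sub_one_of_pos (show 0 < 1 + s by positivity)]
  have hL_sq : L ^ 2 ≤ 1 + s * L ^ 2 := by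
    rcases le_total s 1 with hs1 | hs1
    · nlinarith
    · nlinarith [sq_nonneg L]
  have hs_le : s ≤ 2 + s * L ^ 2 := by
    rcases le_total L 1 with hL1 | hL1
    · have hexp : 1 + s ≤ exp 1 := (Real.log_le_iff_le_exp (by positivity)).1 hL1
      nlinarith [Real.exp_one_lt_d9, mul_nonneg hs (sq_nonneg L)]
    · nlinarith [one_le_pow₀ hL1 (n := 2)]
  calc √(1 + t ^ 2) * (1 + arsinh t ^ 2) ≤ (1 + s) * (1 + 4 * L ^ 2) := by
        gcongr
        · exact sqrt_one_add_sq_le t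
        · exact arsinh_sq_le t
    _ = 1 + s + 4 * L ^ 2 + 4 * (s * L ^ 2) := by ring
    _ ≤ 7 + 9 * (s * L ^ 2) := by linarith

theorem contDiff_arctan_arsinh {n : WithTop ℕ∞} : ContDiff ℝ n fun t => arctan (arsinh t) :=
  Real.contDiff_arctan.comp Real.contDiff_arsinh

theorem abs_arctan_arsinh_le (t : ℝ) : |arctan (arsinh t)| ≤ π / 2 :=
  abs_le.2 ⟨(Real.neg_pi_div_two_lt_arctan _).le, (Real.arctan_lt_pi_div_two _).le⟩

theorem deriv_arctan_arsinh (t : ℝ) :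
    deriv (fun s => arctan (arsinh s)) t = (√(1 + t ^ 2) * (1 + arsinh t ^ 2))⁻¹ := by
  rw [(Real.hasDerivAt_arsinh t).arctan.deriv, one_div, mul_inv, mul_comm]

theorem deriv_arctan_arsinh_pos (t : ℝ) : 0 < deriv (fun s => arctan (arsinh s)) t := by
  rw [deriv_arctan_arsinh]
  positivity

theorem one_div_le_mul_deriv_arctan_arsinh {t P K : ℝ} (hP : 0 ≤ P)
    (h : |t| * log (1 + |t|) ^ 2 ≤ K * (P + 1)) :
    1 / (1 + P) ≤ (7 + 9 * K) * deriv (fun s => arctan (arsinh s)) t := by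
  rw [deriv_arctan_arsinh, ← div_eq_mul_inv, div_le_div_iff₀ (by positivity) (by positivity)]
  linarith [sqrt_mul_one_add_arsinh_sq_le t]

end ArctanArsinh

theorem norm_fderiv_fderiv {E F : Type*} [NormedAddCommGroup E] [NormedSpace ℝ E]
    [NormedAddCommGroup F] [NormedSpace ℝ F] (f : E → F) (x : E) :
    ‖fderiv ℝ (fderiv ℝ f) x‖ = ‖iteratedFDeriv ℝ 2 f x‖ := by
  rw [← norm_iteratedFDeriv_one, norm_iteratedFDeriv_fderiv]

theorem abs_pd_le_norm_gradient (u : E2 → ℝ) (i : Fin 2) (x : E2) : |pd u i x| ≤ ‖∇ u x‖ := by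
  rw [norm_gradient]
  simpa [pd, ee] using (fderiv ℝ u x).le_opNorm (ee i)

theorem statement13_general {E ι : Type*} [NormedAddCommGroup E] [InnerProductSpace ℝ E]
    [FiniteDimensional ℝ E] [Fintype ι]
    (b : OrthonormalBasis ι ℝ E) (hdim : finrank ℝ E ≤ 2) {f u : E → ℝ} (hf : ContDiff ℝ 2 f)
    (hpos : ∀ x q, q ≠ 0 → 0 < fderiv ℝ (fderiv ℝ f) (∇ u x) q q) {Λ : ℝ}
    (hgrow : ∀ x, ‖fderiv ℝ (fderiv ℝ f) (∇ u x)‖ ≤ Λ / (1 + ‖∇ u x‖)) (hu : ContDiff ℝ 2 u)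
    (heq : ∀ x, ∑ i, fderiv ℝ (fun y => fderiv ℝ f (∇ u y) (b i)) x (b i) = 0) (v : E) {K : ℝ}
    (hbd : ∀ x, |fderiv ℝ u x v| * log (1 + |fderiv ℝ u x v|) ^ 2 ≤ K * (‖∇ u x‖ + 1)) :
    ∃ a : ℝ, ∀ x, fderiv ℝ u x v = a := by
  have hΛ : 0 ≤ Λ := by
    have h := (norm_nonneg (fderiv ℝ (fderiv ℝ f) (∇ u 0))).trans (hgrow 0)
    rwa [le_div_iff₀ (by positivity), zero_mul] at h
  have hbound (x : E) : ‖fderiv ℝ (fderiv ℝ f) (∇ u x)‖ ≤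
      Λ * (7 + 9 * K) * deriv (fun s => arctan (arsinh s)) (fderiv ℝ u x v) :=
    calc ‖fderiv ℝ (fderiv ℝ f) (∇ u x)‖ ≤ Λ * (1 / (1 + ‖∇ u x‖)) := by
          simpa only [mul_one_div] using hgrow x
      _ ≤ Λ * ((7 + 9 * K) * deriv (fun s => arctan (arsinh s)) (fderiv ℝ u x v)) := by
          gcongr
          exact one_div_le_mul_deriv_arctan_arsinh (norm_nonneg _) (hbd x)
      _ = _ := by ring
  exact exists_fderiv_apply_eq_const_of_norm_hessian_le b hdim hf hu hpos heq v
    contDiff_arctan_arsinh abs_arctan_arsinh_le deriv_arctan_arsinh_pos hbound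

theorem statement13 (f u : E2 → ℝ)
    (hf : ContDiff ℝ 2 f)
    (hpos : ∀ p q : E2, q ≠ 0 → 0 < Hess f p q)
    (Lam : ℝ) (hLam : 0 < Lam)
    (hgrow : ∀ p : E2, ‖iteratedFDeriv ℝ 2 f p‖ ≤ Lam / (1 + ‖p‖))
    (hu : ContDiff ℝ 2 u) (heq : solves f u)
    (K : ℝ) (hK : 0 < K)
    (hbd : ∀ x : E2, |pd u 0 x| * (Real.log (1 + |pd u 0 x|)) ^ 2 ≤ K * (|pd u 1 x| + 1)) :
    ∃ a : ℝ, ∀ x : E2, pd u 0 x = a := by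
  exact statement13_general (EuclideanSpace.basisFun (Fin 2) ℝ) (by simp) hf
    (fun x q hq => by simpa [Hess, iteratedFDeriv_two_apply] using hpos (∇ u x) q hq)
    (fun x => by simpa only [norm_fderiv_fderiv] using hgrow (∇ u x)) hu
    (fun x => by simpa [ee] using heq x) (ee 0)
    (fun x => (hbd x).trans (by gcongr; exact abs_pd_le_norm_gradient u 1 x))
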